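/- Let X be a finite set with nonnegative distance d_X, ε > 0, δ ≥ 1, let G be a δ-spanner of X (edge weights agree with d_X and d_G(x,x') ≤ δ·d_X(x,x') for all x,x'), let π be a probability distribution on X and d_Q : X × X → ℝ. If a mechanism K is OptQL(π, (ε/δ)·d_G, d_Q) — i.e., K satisfies (ε/δ)·d_G-privacy and minimizes QL(·, π, d_Q) among all (ε/δ)·d_G-private mechanisms — then K satisfies ε·d_X-privacy and K is OptPriv(π, d_Q, d_Q, q) for q = QL(K, π, d_Q). -/

import Mathlib

variable {X : Type*}

/-- A mechanism on a finite set `X`: a row-stochastic matrix. -/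
def IsMechanism [Fintype X] (K : X → X → ℝ) : Prop :=
  (∀ x z, 0 ≤ K x z) ∧ ∀ x, ∑ z, K x z = 1

/-- `K` satisfies `d`-privacy. -/
def DPrivate (d : X → X → ℝ) (K : X → X → ℝ) : Prop :=
  ∀ x x' z, K x z ≤ Real.exp (d x x') * K x' z

/-- A prior distribution on `X`. -/
def IsPrior [Fintype X] (pr : X → ℝ) : Prop :=
  (∀ x, 0 ≤ pr x) ∧ ∑ x, pr x = 1

/-- Quality loss of mechanism `K` under prior `pr` and metric `d`. -/
def QL [Fintype X] (K : X → X → ℝ) (pr : X → ℝ) (d : X → X → ℝ) : ℝ :=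
  ∑ x, ∑ z, pr x * K x z * d x z

/-- Composition (matrix product) of a mechanism with a remapping. -/
def comp [Fintype X] (K H : X → X → ℝ) : X → X → ℝ :=
  fun x x' => ∑ z, K x z * H z x'

/-- Adversary's expected error: infimum of quality loss over all remappings. -/
noncomputable def AdvError [Fintype X] (K : X → X → ℝ) (pr : X → ℝ) (d : X → X → ℝ) : ℝ :=
  sInf {q | ∃ H, IsMechanism H ∧ QL (comp K H) pr d = q}

/-- `K` is d-private with minimal quality loss among d-private mechanisms. -/
def OptQL [Fintype X] (pr : X → ℝ) (d dQ : X → X → ℝ) (K : X → X → ℝ) : Prop :=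
  IsMechanism K ∧ DPrivate d K ∧
    ∀ K', IsMechanism K' → DPrivate d K' → QL K pr dQ ≤ QL K' pr dQ

/-- `K` has quality loss at most `q` and maximal adversary error among such mechanisms. -/
def OptPriv [Fintype X] (pr : X → ℝ) (dA dQ : X → X → ℝ) (q : ℝ) (K : X → X → ℝ) : Prop :=
  QL K pr dQ ≤ q ∧
    ∀ K', IsMechanism K' → QL K' pr dQ ≤ q → AdvError K' pr dA ≤ AdvError K pr dA

/-- A walk in the graph with edge relation `E` from `x` to `x'`. -/
def IsWalk (E : X → X → Prop) (x x' : X) (p : List X) : Prop :=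
  p.head? = some x ∧ p.getLast? = some x' ∧ p.Chain' E

/-- The total weight of a walk. -/
def walkWeight (w : X → X → ℝ) (p : List X) : ℝ :=
  ((p.zip p.tail).map fun e => w e.1 e.2).sum

/-- Shortest-path distance induced by a weighted graph. -/
noncomputable def graphDist (E : X → X → Prop) (w : X → X → ℝ) (x x' : X) : ℝ :=
  sInf {c | ∃ p : List X, IsWalk E x x' p ∧ walkWeight w p = c}

/-!
Remapping the output of a private mechanism preserves privacy, so no adversary can improve on the
output of a mechanism that is already optimal for quality loss: its adversary error equals its
quality loss. For any other mechanism the identity remapping shows that the adversary error is at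
most the quality loss, hence at most `q`.
-/

section

variable [Fintype X]

theorem isMechanism_iff_mem_rowStochastic [DecidableEq X] {K : X → X → ℝ} :
    IsMechanism K ↔ Matrix.of K ∈ Matrix.rowStochastic ℝ X :=
  Matrix.mem_rowStochastic_iff_sum.symm

theorem isMechanism_one [DecidableEq X] : IsMechanism (1 : Matrix X X ℝ) :=
  isMechanism_iff_mem_rowStochastic.2 (one_mem _)

theorem isMechanism_comp {K H : X → X → ℝ} (hK : IsMechanism K) (hH : IsMechanism H) :
    IsMechanism (comp K H) := by
  classical
  exact isMechanism_iff_mem_rowStochastic.2 <|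
    mul_mem (isMechanism_iff_mem_rowStochastic.1 hK) (isMechanism_iff_mem_rowStochastic.1 hH)

theorem comp_one [DecidableEq X] (K : X → X → ℝ) : comp K (1 : Matrix X X ℝ) = K :=
  Matrix.mul_one (Matrix.of K)

theorem dPrivate_comp {d K H : X → X → ℝ} (hK : DPrivate d K) (hH : ∀ x z, 0 ≤ H x z) :
    DPrivate d (comp K H) := fun x x' z ↦
  calc ∑ y, K x y * H y z
    _ ≤ ∑ y, Real.exp (d x x') * K x' y * H y z :=
      Finset.sum_le_sum fun y _ ↦ mul_le_mul_of_nonneg_right (hK x x' y) (hH y z)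
    _ = Real.exp (d x x') * ∑ y, K x' y * H y z := by simp only [Finset.mul_sum, mul_assoc]

theorem IsMechanism.abs_QL_le {K : X → X → ℝ} (hK : IsMechanism K) (pr : X → ℝ)
    (d : X → X → ℝ) : |QL K pr d| ≤ ∑ x, ∑ z, |pr x * d x z| := by
  classical
  have abs_entry_le_one (x z : X) : |K x z| ≤ 1 := by
    rw [abs_of_nonneg (hK.1 x z)]
    exact Matrix.le_one_of_mem_rowStochastic (isMechanism_iff_mem_rowStochastic.1 hK)
  calc |QL K pr d|
    _ ≤ ∑ x, |∑ z, pr x * K x z * d x z| := Finset.abs_sum_le_sum_abs _ _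
    _ ≤ ∑ x, ∑ z, |pr x * K x z * d x z| :=
      Finset.sum_le_sum fun _ _ ↦ Finset.abs_sum_le_sum_abs _ _
    _ ≤ ∑ x, ∑ z, |pr x * d x z| := Finset.sum_le_sum fun x _ ↦ Finset.sum_le_sum fun z _ ↦ by
      rw [mul_right_comm, abs_mul]
      exact mul_le_of_le_one_right (abs_nonneg _) (abs_entry_le_one x z)

theorem IsMechanism.bddBelow_QL_comp {K : X → X → ℝ} (hK : IsMechanism K) (pr : X → ℝ)
    (d : X → X → ℝ) : BddBelow {q | ∃ H, IsMechanism H ∧ QL (comp K H) pr d = q} := by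
  refine ⟨-∑ x, ∑ z, |pr x * d x z|, ?_⟩
  rintro _ ⟨H, hH, rfl⟩
  exact neg_le_of_abs_le ((isMechanism_comp hK hH).abs_QL_le pr d)

theorem IsMechanism.advError_le_QL {K : X → X → ℝ} (hK : IsMechanism K) (pr : X → ℝ)
    (d : X → X → ℝ) : AdvError K pr d ≤ QL K pr d := by
  classical
  exact csInf_le (hK.bddBelow_QL_comp pr d) ⟨_, isMechanism_one, by rw [comp_one]⟩

theorem OptQL.advError_eq_QL {pr : X → ℝ} {d dQ K : X → X → ℝ} (hK : OptQL pr d dQ K) :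
    AdvError K pr dQ = QL K pr dQ := by
  classical
  obtain ⟨hmech, hpriv, hmin⟩ := hK
  refine le_antisymm (hmech.advError_le_QL pr dQ) (le_csInf ⟨_, _, isMechanism_one, rfl⟩ ?_)
  rintro _ ⟨H, hH, rfl⟩
  exact hmin _ (isMechanism_comp hmech hH) (dPrivate_comp hpriv hH.1)

theorem OptQL.optPriv {pr : X → ℝ} {d dQ K : X → X → ℝ} (hK : OptQL pr d dQ K) :
    OptPriv pr dQ dQ (QL K pr dQ) K := by
  refine ⟨le_rfl, fun K' hK' hq ↦ ?_⟩
  calc AdvError K' pr dQ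
    _ ≤ QL K' pr dQ := hK'.advError_le_QL pr dQ
    _ ≤ QL K pr dQ := hq
    _ = AdvError K pr dQ := hK.advError_eq_QL.symm

end

theorem DPrivate.mono {d e K : X → X → ℝ} (hK : DPrivate d K) (hnonneg : ∀ x z, 0 ≤ K x z)
    (hde : ∀ x x', d x x' ≤ e x x') : DPrivate e K := fun x x' z ↦
  (hK x x' z).trans <|
    mul_le_mul_of_nonneg_right (Real.exp_le_exp.2 (hde x x')) (hnonneg x' z)

theorem spanner_optQL_implies_optPriv_general [Fintype X] {pr : X → ℝ} {d e dQ K : X → X → ℝ}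
    (hde : ∀ x x', d x x' ≤ e x x') (hopt : OptQL pr d dQ K) :
    DPrivate e K ∧ OptPriv pr dQ dQ (QL K pr dQ) K :=
  ⟨hopt.2.1.mono hopt.1.1 hde, hopt.optPriv⟩

/-- a mechanism optimal for the spanner metric is ε·d_X-private and
OptPriv for `q = QL(K, pr, dQ)`. -/
theorem spanner_optQL_implies_optPriv [Fintype X] (dX : X → X → ℝ)
    (hnn : ∀ x x', 0 ≤ dX x x') (ε δ : ℝ) (hε : 0 < ε) (hδ : 1 ≤ δ)
    (E : X → X → Prop)
    (hspan : ∀ x x', graphDist E dX x x' ≤ δ * dX x x')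
    (pr : X → ℝ) (hpr : IsPrior pr) (dQ : X → X → ℝ)
    (K : X → X → ℝ)
    (hopt : OptQL pr (fun x x' => (ε / δ) * graphDist E dX x x') dQ K) :
    DPrivate (fun x x' => ε * dX x x') K ∧
      OptPriv pr dQ dQ (QL K pr dQ) K := by
  have hδ0 : 0 < δ := one_pos.trans_le hδ
  refine spanner_optQL_implies_optPriv_general (fun x x' ↦ ?_) hopt
  calc ε / δ * graphDist E dX x x'
    _ ≤ ε / δ * (δ * dX x x') := mul_le_mul_of_nonneg_left (hspan x x') (div_pos hε hδ0).le
    _ = ε * dX x x' := by field_simp
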